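/- (Mironov, rank 3, genus g) Let g ≥ 1 be an integer and α ∈ ℂ a nonzero constant. In the algebra of ℂ-linear endomorphisms of ℂ[x], define the operator L = (D³ + X² + α)² + g(g+1)D (an operator of order 6 with polynomial coefficients). Then there exist an ordinary differential operator M of order 6g + 3 with polynomial coefficients, i.e. M = Σ_{j=0}^{6g+3} P_j(X)∘D^j with each P_j ∈ ℂ[x] and P_{6g+3} ≠ 0, and constants a_0, …, a_{2g} ∈ ℂ such that L∘M = M∘L and M² = L^{2g+1} + a_{2g}·L^{2g} + … + a_1·L + a_0. -/

import Mathlib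

open Polynomial Finset

/-- The differentiation operator on `ℂ[x]`, as a `ℂ`-linear endomorphism. -/
noncomputable def Dop : Module.End ℂ (Polynomial ℂ) := Polynomial.derivative

/-- The operator of multiplication by `x` on `ℂ[x]`, as a `ℂ`-linear endomorphism. -/
noncomputable def Xop : Module.End ℂ (Polynomial ℂ) := LinearMap.mulLeft ℂ Polynomial.X

set_option linter.unusedSimpArgs false

section abs
variable {R : Type*} [Ring R] [Module ℂ[X][X] R]

/-- abstract commutation: `f • T` is `∑ x^s T f_s(L)`. -/
theorem mir_comm (d L : R) (V W P : ℂ[X][X])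
    (hd : ∀ (f : ℂ[X][X]) (T : R), d * (f • T) = f • (d * T) + derivative f • T)
    (hL : ∀ T : R, L * T = d * (d * (d * (d * T))) + (2 * V) • (d * (d * T))
        + (2 * derivative V) • (d * T)
        + (derivative (derivative V) + V ^ 2 + W) • T)
    (hz : ∀ T : R, (C X : ℂ[X][X]) • T = T * L)
    (hN : derivative (derivative (derivative (derivative (derivative P))))
      + 4 * V * derivative (derivative (derivative P))
      + 6 * derivative V * derivative (derivative P)
      + 2 * derivative (derivative V) * derivative P
      - 2 * derivative W * P - 4 * W * derivative P + 4 * C X * derivative P = 0)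
    (M : R) (hM : M = (2 * P) • (d * d) - (2 * derivative P) • d
      + (derivative (derivative P) + 2 * V * P) • (1 : R)) :
    L * M = M * L := by
  have h4 : d * (d * (d * d)) = (C X : ℂ[X][X]) • (1 : R) - ((2 * V) • (d * d)
        + (2 * derivative V) • d
        + (derivative (derivative V) + V ^ 2 + W) • (1 : R)) := by
    have h1 := hL 1
    have h2 := hz 1
    simp only [mul_one, one_mul] at h1 h2
    rw [h2, h1]; abel
  have hN' := congrArg derivative hN
  rw [← hz M, hL, hM]
  simp only [hd, mul_add, mul_sub, mul_one, h4, derivative_add, derivative_sub, derivative_mul,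
    derivative_C, derivative_X, derivative_ofNat, derivative_pow, derivative_zero, zero_mul, mul_zero, zero_add, add_zero,
    Nat.cast_ofNat, pow_one, map_ofNat, derivative_one, Nat.add_one_sub_one] at hN' ⊢
  match_scalars
  · ring
  · linear_combination 2 * hN
  · linear_combination hN'
  · ring

theorem mir_sq (d L : R) (V W P F : ℂ[X][X])
    (hd : ∀ (f : ℂ[X][X]) (T : R), d * (f • T) = f • (d * T) + derivative f • T)
    (hL : ∀ T : R, L * T = d * (d * (d * (d * T))) + (2 * V) • (d * (d * T))
        + (2 * derivative V) • (d * T)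
        + (derivative (derivative V) + V ^ 2 + W) • T)
    (hz : ∀ T : R, (C X : ℂ[X][X]) • T = T * L)
    (hc : ∀ (f : ℂ[X][X]) (T U : R), L * U = U * L → (f • T) * U = f • (T * U))
    (M : R) (hM : M = (2 * P) • (d * d) - (2 * derivative P) • d
      + (derivative (derivative P) + 2 * V * P) • (1 : R))
    (hLM : L * M = M * L)
    (hF : F = 4 * C X * P ^ 2 + 2 * P * derivative (derivative (derivative (derivative P)))
      + 8 * P * derivative (derivative P) * V + 4 * P * derivative P * derivative V
      - 2 * derivative P * derivative (derivative (derivative P))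
      - 4 * (derivative P) ^ 2 * V + (derivative (derivative P)) ^ 2 - 4 * P ^ 2 * W) :
    M * M = F • (1 : R) := by
  have h4 : d * (d * (d * d)) = (C X : ℂ[X][X]) • (1 : R) - ((2 * V) • (d * d)
        + (2 * derivative V) • d
        + (derivative (derivative V) + V ^ 2 + W) • (1 : R)) := by
    have h1 := hL 1
    have h2 := hz 1
    simp only [mul_one, one_mul] at h1 h2
    rw [h2, h1]; abel
  have h0 : M * M = (2 * P) • (d * (d * M)) - (2 * derivative P) • (d * M)
      + (derivative (derivative P) + 2 * V * P) • M := by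
    conv_lhs => enter [1]; rw [hM]
    rw [add_mul, sub_mul, hc _ _ _ hLM, hc _ _ _ hLM, hc _ _ _ hLM, one_mul, mul_assoc]
  rw [h0, hM, hF]
  simp only [hd, mul_add, mul_sub, mul_one, h4, derivative_add, derivative_sub, derivative_mul,
    derivative_C, derivative_X, derivative_ofNat, derivative_pow, derivative_zero, zero_mul, mul_zero, zero_add, add_zero,
    Nat.cast_ofNat, pow_one, map_ofNat, derivative_one, Nat.add_one_sub_one]
  match_scalars <;> ring

theorem mir_const (V W P F : ℂ[X][X])
    (hN : derivative (derivative (derivative (derivative (derivative P))))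
      + 4 * V * derivative (derivative (derivative P))
      + 6 * derivative V * derivative (derivative P)
      + 2 * derivative (derivative V) * derivative P
      - 2 * derivative W * P - 4 * W * derivative P + 4 * C X * derivative P = 0)
    (hF : F = 4 * C X * P ^ 2 + 2 * P * derivative (derivative (derivative (derivative P)))
      + 8 * P * derivative (derivative P) * V + 4 * P * derivative P * derivative V
      - 2 * derivative P * derivative (derivative (derivative P))
      - 4 * (derivative P) ^ 2 * V + (derivative (derivative P)) ^ 2 - 4 * P ^ 2 * W) :
    F = C (F.coeff 0) := by
  have : derivative F = 0 := by
    rw [hF]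
    simp only [derivative_add, derivative_sub, derivative_mul,
    derivative_C, derivative_X, derivative_ofNat, derivative_pow, derivative_zero, zero_mul, mul_zero, zero_add, add_zero,
    Nat.cast_ofNat, pow_one, map_ofNat, derivative_one, Nat.add_one_sub_one]
    linear_combination 2 * P * hN
  exact eq_C_of_derivative_eq_zero this
end abs


/-- Coefficients `δ_{g-k}` of the polynomial solution. -/
noncomputable def mEps (g : ℕ) (α : ℂ) : ℕ → ℂ[X]
  | 0 => 1
  | k + 1 =>
    C (-(2 * (2 * ((g : ℂ) - (k + 1)) + 1) * (((g : ℂ) - (k + 1)) - g) * (((g : ℂ) - (k + 1)) + g + 1))⁻¹) *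
      (C (4 * ((g : ℂ) - (k + 1) + 1)) * X * mEps g α k
       + (if 2 ≤ k then C (4 * α * ((g : ℂ) - (k + 1) + 1) * ((g : ℂ) - (k + 1) + 2) * ((g : ℂ) - (k + 1) + 3)) * mEps g α (k - 2) else 0)
       + (if 4 ≤ k then C (((g : ℂ) - (k + 1) + 1) * ((g : ℂ) - (k + 1) + 2) * ((g : ℂ) - (k + 1) + 3)
          * ((g : ℂ) - (k + 1) + 4) * ((g : ℂ) - (k + 1) + 5)) * mEps g α (k - 4) else 0))
  termination_by k => k
  decreasing_by all_goals omega

theorem mEps_deg (g : ℕ) (α : ℂ) (k : ℕ) : (mEps g α k).natDegree ≤ k := by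
  induction k using Nat.strong_induction_on with
  | _ k ih =>
    cases k with
    | zero => simp [mEps]
    | succ k =>
      rw [mEps]
      refine (natDegree_C_mul_le _ _).trans ?_
      refine natDegree_add_le_of_degree_le (natDegree_add_le_of_degree_le ?_ ?_) ?_
      · rw [mul_assoc]
        refine (natDegree_C_mul_le _ _).trans ?_
        refine natDegree_mul_le.trans ?_
        have := ih k (by omega)
        simp; omega
      · split_ifs
        · refine (natDegree_C_mul_le _ _).trans ?_
          have := ih (k - 2) (by omega)
          omega
        · simp
      · split_ifs
        · refine (natDegree_C_mul_le _ _).trans ?_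
          have := ih (k - 4) (by omega)
          omega
        · simp

theorem kap_ne (g k : ℕ) (h : k < g) :
   (2 * (2 * ((g : ℂ) - (k + 1)) + 1) * (((g : ℂ) - (k + 1)) - g) * (((g : ℂ) - (k + 1)) + g + 1)) ≠ 0 := by
  obtain ⟨s, rfl⟩ := Nat.exists_eq_add_of_lt h
  push_cast
  have h1 : (2 * ((s : ℂ)) + 1) ≠ 0 := by exact_mod_cast (by omega : 2 * s + 1 ≠ 0)
  have h2 : ((k : ℂ) + 1) ≠ 0 := by exact_mod_cast (by omega : k + 1 ≠ 0)
  have h3 : (2 * (s : ℂ) + k + 2) ≠ 0 := by exact_mod_cast (by omega : 2 * s + k + 2 ≠ 0)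
  have : 2 * (2 * ((k : ℂ) + s + 1 - (k + 1)) + 1) * ((k : ℂ) + s + 1 - (k + 1) - (k + s + 1)) *
    ((k : ℂ) + s + 1 - (k + 1) + (k + s + 1) + 1) = - 2 * (2 * (s : ℂ) + 1) * (k + 1) * (2 * s + k + 2) := by ring
  rw [this]
  exact mul_ne_zero (mul_ne_zero (mul_ne_zero (by norm_num) h1) h2) h3

theorem mEps_lead (g : ℕ) (α : ℂ) (k : ℕ) (hk : k ≤ g) : (mEps g α k).coeff k ≠ 0 := by
  induction k with
  | zero => simp [mEps]
  | succ k ih =>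
    rw [mEps, coeff_C_mul, coeff_add, coeff_add, mul_assoc (C _) X, coeff_C_mul, coeff_X_mul]
    have e1 : (if 2 ≤ k then C (4 * α * ((g : ℂ) - (k + 1) + 1) * ((g : ℂ) - (k + 1) + 2) * ((g : ℂ) - (k + 1) + 3)) * mEps g α (k - 2) else 0).coeff (k + 1) = 0 := by
      split_ifs
      · rw [coeff_C_mul, coeff_eq_zero_of_natDegree_lt, mul_zero]
        have := mEps_deg g α (k - 2)
        omega
      · simp
    have e2 : (if 4 ≤ k then C (((g : ℂ) - (k + 1) + 1) * ((g : ℂ) - (k + 1) + 2) * ((g : ℂ) - (k + 1) + 3)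
          * ((g : ℂ) - (k + 1) + 4) * ((g : ℂ) - (k + 1) + 5)) * mEps g α (k - 4) else 0).coeff (k + 1) = 0 := by
      split_ifs
      · rw [coeff_C_mul, coeff_eq_zero_of_natDegree_lt, mul_zero]
        have := mEps_deg g α (k - 4)
        omega
      · simp
    rw [e1, e2, add_zero, add_zero]
    refine mul_ne_zero (neg_ne_zero.2 (inv_ne_zero (kap_ne g k hk))) (mul_ne_zero ?_ (ih (by omega)))
    have : (4 * ((g : ℂ) - (k + 1) + 1)) = 4 * ((g - k : ℕ) : ℂ) := by
      rw [Nat.cast_sub (by omega)]; ring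
    rw [this]
    exact mul_ne_zero (by norm_num) (by exact_mod_cast (by omega : g - k ≠ 0))

/-- The recursion for the coefficients. -/
theorem delta_exists (g : ℕ) (α : ℂ) : ∃ δ : ℕ → ℂ[X],
    (∀ s, g < s → δ s = 0) ∧ (∀ s, s ≤ g → (δ s).natDegree ≤ g - s) ∧ (δ 0).coeff g = 1 / 2 ∧
    ∀ s : ℕ, C (2 * (2 * (s : ℂ) + 1) * ((s : ℂ) - g) * ((s : ℂ) + g + 1)) * δ s
      + C (4 * ((s : ℂ) + 1)) * X * δ (s + 1)
      + C (4 * α * ((s : ℂ) + 1) * ((s : ℂ) + 2) * ((s : ℂ) + 3)) * δ (s + 3)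
      + C (((s : ℂ) + 1) * ((s : ℂ) + 2) * ((s : ℂ) + 3) * ((s : ℂ) + 4) * ((s : ℂ) + 5)) * δ (s + 5) = 0 := by
  have hl := mEps_lead g α g le_rfl
  set l := (mEps g α g).coeff g with hldef
  refine ⟨fun s => if s ≤ g then C (1 / (2 * l)) * mEps g α (g - s) else 0, ?_, ?_, ?_, ?_⟩
  · intro s hs
    simp only []
    rw [if_neg (by omega)]
  · intro s hs
    simp only []
    rw [if_pos hs]
    exact (natDegree_C_mul_le _ _).trans (mEps_deg _ _ _)
  · simp only [zero_le, if_true, Nat.sub_zero, coeff_C_mul, ← hldef]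
    field_simp
  · intro s
    rcases lt_trichotomy s g with h | h | h
    · obtain ⟨k, rfl⟩ := Nat.exists_eq_add_of_lt h
      have hs : (((s + k + 1 : ℕ) : ℂ) - (k + 1)) = s := by push_cast; ring
      have hk := kap_ne (s + k + 1) k (by omega)
      have key := mEps.eq_2 (s + k + 1) α k
      rw [hs] at key hk
      have i1 : (s + k + 1) - s = k + 1 := by omega
      have i2 : (s + k + 1) - (s + 1) = k := by omega
      have i3 : (s + k + 1) - (s + 3) = k - 2 := by omega
      have i4 : (s + k + 1) - (s + 5) = k - 4 := by omega
      simp only [i1, i2, i3, i4]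
      have j3 : (s + 3 ≤ s + k + 1) ↔ 2 ≤ k := by omega
      have j5 : (s + 5 ≤ s + k + 1) ↔ 4 ≤ k := by omega
      rw [if_pos (by omega), if_pos (by omega), key]
      simp only [j3, j5]
      set κ := 2 * (2 * (s : ℂ) + 1) * ((s : ℂ) - (s + k + 1 : ℕ)) * ((s : ℂ) + (s + k + 1 : ℕ) + 1) with hκ
      have hi : C κ * C (-κ⁻¹) = (-1 : ℂ[X]) := by
        rw [← C_mul, mul_neg, mul_inv_cancel₀ hk]; simp
      have t3 : ∀ (a c m : ℂ[X]) (p : Prop) [Decidable p],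
          a * (if p then c * m else 0) = c * (if p then a * m else 0) := by
        intro a c m p _
        split_ifs
        · ring
        · simp
      rw [t3 _ _ _ (2 ≤ k), t3 _ _ _ (4 ≤ k)]
      generalize (if 2 ≤ k then C (4 * α * ((s : ℂ) + 1) * ((s : ℂ) + 2) * ((s : ℂ) + 3)) * mEps (s + k + 1) α (k - 2) else 0) = B
      generalize (if 4 ≤ k then C (((s : ℂ) + 1) * ((s : ℂ) + 2) * ((s : ℂ) + 3) * ((s : ℂ) + 4) * ((s : ℂ) + 5)) * mEps (s + k + 1) α (k - 4) else 0) = E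
      linear_combination (C (1 / (2 * l)) * (C (4 * ((s : ℂ) + 1)) * X * mEps (s + k + 1) α k + B + E)) * hi
    · subst h
      simp
    · simp only []
      rw [if_neg (by omega), if_neg (by omega), if_neg (by omega), if_neg (by omega)]
      simp

theorem ode_exists (g : ℕ) (α : ℂ) (V W : ℂ[X][X]) (hV : V = X ^ 3 + C (C α))
   (hW : W = C (C ((g : ℂ) * (g + 1))) * X) : ∃ P : ℂ[X][X],
    (∀ s, g < s → P.coeff s = 0) ∧ (∀ s, s ≤ g → (P.coeff s).natDegree ≤ g - s) ∧
    (P.coeff 0).coeff g = 1 / 2 ∧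
     derivative (derivative (derivative (derivative (derivative P))))
      + 4 * V * derivative (derivative (derivative P))
      + 6 * derivative V * derivative (derivative P)
      + 2 * derivative (derivative V) * derivative P
      - 2 * derivative W * P - 4 * W * derivative P + 4 * C X * derivative P = 0 := by
  obtain ⟨δ, h1, h2, h3, h4⟩ := delta_exists g α
  let P : ℂ[X][X] := ∑ s ∈ range (g + 1), C (δ s) * X ^ s
  have hP : ∀ s, P.coeff s = δ s := by
    intro s
    simp only [P, finsetSum_coeff, coeff_C_mul_X_pow]
    rw [Finset.sum_ite_eq]
    split_ifs with h
    · rfl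
    · rw [h1]; simpa using h
  refine ⟨P, fun s hs => by rw [hP, h1 s hs], fun s hs => by rw [hP]; exact h2 s hs, by rw [hP, h3], ?_⟩
  have c1 : ∀ (f : ℂ[X][X]) (s : ℕ), (X * derivative f).coeff s = (s : ℂ[X]) * f.coeff s := by
    intro f s
    rcases s with _ | s
    · simp
    · rw [coeff_X_mul, coeff_derivative]; push_cast; ring
  have e2 : X ^ 2 * derivative (derivative P) = X * derivative (X * derivative P) - X * derivative P := by
    simp only [derivative_mul, derivative_X]; ring
  have e3 : X ^ 3 * derivative (derivative (derivative P)) =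
     X * derivative (X ^ 2 * derivative (derivative P)) - 2 * (X ^ 2 * derivative (derivative P)) := by
    simp only [derivative_mul, derivative_X, derivative_X_pow, map_ofNat, Nat.cast_ofNat]; ring
  have c2 : ∀ s : ℕ, (X ^ 2 * derivative (derivative P)).coeff s = ((s : ℂ[X]) ^ 2 - s) * δ s := by
    intro s
    rw [e2, coeff_sub, c1, c1, hP]; ring
  have c3 : ∀ s : ℕ, (X ^ 3 * derivative (derivative (derivative P))).coeff s = ((s : ℂ[X]) - 2) * ((s : ℂ[X]) ^ 2 - s) * δ s := by
    intro s
    have : (2 : ℂ[X][X]) = C 2 := (map_ofNat C 2).symm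
    rw [e3, coeff_sub, c1, this, coeff_C_mul, c2]; ring
  have dV : derivative V = 3 * X ^ 2 := by rw [hV]; simp only [derivative_add, derivative_X_pow, derivative_C, map_ofNat, Nat.cast_ofNat]; ring
  have ddV : derivative (derivative V) = 6 * X := by rw [dV]; simp only [derivative_mul, derivative_ofNat, derivative_X_pow, derivative_C, map_ofNat, Nat.cast_ofNat]; ring

  have dW : derivative W = C (C ((g : ℂ) * (g + 1))) := by rw [hW]; simp
  have tot : derivative (derivative (derivative (derivative (derivative P))))
      + 4 * V * derivative (derivative (derivative P))
      + 6 * derivative V * derivative (derivative P)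
      + 2 * derivative (derivative V) * derivative P
      - 2 * derivative W * P - 4 * W * derivative P + 4 * C X * derivative P
      = derivative (derivative (derivative (derivative (derivative P))))
      + C 4 * (X ^ 3 * derivative (derivative (derivative P)))
      + C (4 * C α) * derivative (derivative (derivative P))
      + C 18 * (X ^ 2 * derivative (derivative P))
      + C (12 - 4 * C ((g : ℂ) * (g + 1))) * (X * derivative P)
      - C (2 * C ((g : ℂ) * (g + 1))) * P + C (4 * X) * derivative P := by
    rw [ddV, dV, dW, hV, hW]
    simp only [C_mul, C_sub, C_add, map_ofNat]
    ring
  rw [tot]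
  ext1 s
  simp only [coeff_add, coeff_sub, coeff_C_mul, c3, c2, c1, coeff_derivative, hP, coeff_zero]
  have := h4 s
  simp only [C_mul, C_add, C_sub, map_ofNat, map_natCast, C_1, Nat.cast_add, Nat.cast_one] at this ⊢
  simp only [add_assoc] at this ⊢
  norm_num at this ⊢
  linear_combination this

section modu
variable {R : Type*} [Ring R] [Algebra ℂ R]

/-- The action `f ↦ (T ↦ ∑ x^s T f_s(L))`. -/
noncomputable def mirHom (x L : R) : ℂ[X][X] →+* Module.End ℂ R :=
  eval₂RingHom' (aeval (LinearMap.mulRight ℂ L) : ℂ[X] →ₐ[ℂ] Module.End ℂ R).toRingHom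
    (LinearMap.mulLeft ℂ x) (by
      intro a
      induction a using Polynomial.induction_on' with
      | add p q hp hq => rw [map_add]; exact hp.add_left hq
      | monomial n c =>
        simp only [AlgHom.toRingHom_eq_coe, RingHom.coe_coe, aeval_monomial]
        refine (Algebra.commute_algebraMap_left c _).mul_left ?_
        refine Commute.pow_left ?_ n
        exact LinearMap.ext fun T => by simp [mul_assoc])

theorem mirHom_X (x L T : R) : mirHom x L X T = x * T := by
  simp [mirHom]

theorem mirHom_C (x L T : R) (p : ℂ[X]) : mirHom x L (C p) T = T * aeval L p := by
  simp only [mirHom, eval₂RingHom', RingHom.coe_mk, MonoidHom.coe_mk, OneHom.coe_mk, eval₂_C]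
  induction p using Polynomial.induction_on' with
  | add p q hp hq => rw [map_add, LinearMap.add_apply, hp, hq, map_add, mul_add]
  | monomial n c =>
    change (aeval (LinearMap.mulRight ℂ L) (monomial n c)) T = _
    rw [aeval_monomial, aeval_monomial, Module.End.mul_apply, Module.algebraMap_end_apply,
      LinearMap.pow_mulRight, LinearMap.mulRight_apply, ← Algebra.smul_def, mul_smul_comm]

/-- `R` as a module over `ℂ[z][x]`. -/
@[reducible] noncomputable def mirModule (x L : R) : Module ℂ[X][X] R :=
  Module.compHom R (mirHom x L)

theorem mir_hd (x L d : R) (hdx : d * x = x * d + 1) :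
    letI := mirModule x L
    ∀ (f : ℂ[X][X]) (T : R), d * (f • T) = f • (d * T) + derivative f • T := by
  let _ := mirModule x L
  intro f T
  have hX : ∀ T : R, (X : ℂ[X][X]) • T = x * T := mirHom_X x L
  have hC : ∀ (p : ℂ[X]) (T : R), (C p : ℂ[X][X]) • T = T * aeval L p := fun p T => mirHom_C x L T p
  induction f using Polynomial.induction_on with
  | C a => rw [hC, hC, derivative_C, zero_smul, add_zero, mul_assoc]
  | add p q hp hq => rw [add_smul, mul_add, hp, hq, derivative_add, add_smul, add_smul]; abel
  | monomial n a ih =>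
    have e : (C a * X ^ (n + 1) : ℂ[X][X]) = X * (C a * X ^ n) := by ring
    rw [e]
    generalize (C a * X ^ n : ℂ[X][X]) = q at ih
    rw [derivative_mul, derivative_X, one_mul, add_smul, mul_smul, mul_smul, mul_smul, hX, hX, hX,
      ← mul_assoc, hdx, add_mul, one_mul, mul_assoc, ih, mul_add]
    abel

theorem mir_hc (x L : R) :
    letI := mirModule x L
    ∀ (f : ℂ[X][X]) (T U : R), L * U = U * L → (f • T) * U = f • (T * U) := by
  let _ := mirModule x L
  intro f T U hU
  have hX : ∀ T : R, (X : ℂ[X][X]) • T = x * T := mirHom_X x L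
  have hC : ∀ (p : ℂ[X]) (T : R), (C p : ℂ[X][X]) • T = T * aeval L p := fun p T => mirHom_C x L T p
  induction f using Polynomial.induction_on with
  | C a =>
    rw [hC, hC, mul_assoc, mul_assoc]
    congr 1
    induction a using Polynomial.induction_on' with
    | add p q hp hq => rw [map_add, add_mul, hp, hq, mul_add]
    | monomial n c =>
      rw [aeval_monomial]
      have h1 : Commute L U := hU
      exact ((Algebra.commute_algebraMap_left c U).mul_left (h1.pow_left n))
  | add p q hp hq => rw [add_smul, add_mul, hp, hq, add_smul]
  | monomial n a ih =>
    have e : (C a * X ^ (n + 1) : ℂ[X][X]) = X * (C a * X ^ n) := by ring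
    rw [e]
    generalize (C a * X ^ n : ℂ[X][X]) = q at ih
    rw [mul_smul, mul_smul, hX, hX, mul_assoc, ih]

theorem mir_hL (x L d : R) (hdx : d * x = x * d + 1) (α c : ℂ)
    (hLdef : L = (x ^ 3 + d ^ 2 + α • (1 : R)) ^ 2 + c • x) (V W : ℂ[X][X])
    (hV : V = X ^ 3 + C (C α)) (hW : W = C (C c) * X) :
    letI := mirModule x L
    ∀ T : R, L * T = d * (d * (d * (d * T))) + (2 * V) • (d * (d * T))
        + (2 * derivative V) • (d * T)
        + (derivative (derivative V) + V ^ 2 + W) • T := by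
  let _ := mirModule x L
  intro T
  have hd : ∀ (f : ℂ[X][X]) (T : R), d * (f • T) = f • (d * T) + derivative f • T := mir_hd x L d hdx
  have hX : ∀ T : R, (X : ℂ[X][X]) • T = x * T := mirHom_X x L
  have hC : ∀ (p : ℂ[X]) (T : R), (C p : ℂ[X][X]) • T = T * aeval L p := fun p T => mirHom_C x L T p
  have hCC : ∀ (a : ℂ) (T : R), (C (C a) : ℂ[X][X]) • T = a • T := by
    intro a T
    rw [hC, aeval_C, ← Algebra.commutes, Algebra.smul_def]
  have hVT : ∀ T : R, V • T = x ^ 3 * T + α • T := by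
    intro T
    rw [hV, add_smul, hCC, pow_succ, pow_two, mul_smul, mul_smul, hX, hX, hX]
    simp only [pow_succ, pow_zero, one_mul, mul_assoc]
  have hWT : ∀ T : R, W • T = c • (x * T) := by
    intro T
    rw [hW, mul_smul, hCC, hX]
  have hH : ∀ T : R, (x ^ 3 + d ^ 2 + α • (1 : R)) * T = d * (d * T) + V • T := by
    intro T
    rw [hVT, add_mul, add_mul, pow_two d, mul_assoc, smul_mul_assoc, one_mul]
    abel
  have : L * T = d * (d * (d * (d * T) + V • T)) + V • (d * (d * T) + V • T) + W • T := by
    rw [← hH, ← hH, hWT]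
    conv_lhs => enter [1]; rw [hLdef]
    rw [add_mul, pow_two (_ + _ + _), mul_assoc, smul_mul_assoc]
  rw [this]
  simp only [mul_add, hd]
  module

/-- Expansion of the action. -/
theorem mir_sum (x L : R) :
    letI := mirModule x L
    ∀ (f : ℂ[X][X]) (T : R), f • T = ∑ s ∈ f.support, x ^ s * T * aeval L (f.coeff s) := by
  let _ := mirModule x L
  intro f T
  have hX : ∀ T : R, (X : ℂ[X][X]) • T = x * T := mirHom_X x L
  have hC : ∀ (p : ℂ[X]) (T : R), (C p : ℂ[X][X]) • T = T * aeval L p := fun p T => mirHom_C x L T p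
  have hXn : ∀ (n : ℕ) (T : R), (X ^ n : ℂ[X][X]) • T = x ^ n * T := by
    intro n
    induction n with
    | zero => intro T; simp
    | succ n ih => intro T; rw [pow_succ, mul_smul, hX, ih, pow_succ, mul_assoc]
  conv_lhs => rw [f.as_sum_support_C_mul_X_pow]
  rw [Finset.sum_smul]
  refine Finset.sum_congr rfl fun s _ => ?_
  rw [mul_smul, hXn, hC]
end modu


/-- operators of order `< n`. -/
noncomputable def ordLT (n : ℕ) : Submodule ℂ (Module.End ℂ (Polynomial ℂ)) where
  carrier := {T | ∃ P : ℕ → ℂ[X], T = ∑ j ∈ range n, LinearMap.mulLeft ℂ (P j) * Dop ^ j}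
  add_mem' := by
    rintro _ _ ⟨P, rfl⟩ ⟨Q, rfl⟩
    refine ⟨fun j => P j + Q j, ?_⟩
    rw [← Finset.sum_add_distrib]
    refine Finset.sum_congr rfl fun j _ => ?_
    rw [← add_mul]
    congr 1
    exact LinearMap.ext fun q => by simp [add_mul]
  zero_mem' := ⟨fun _ => 0, by simp⟩
  smul_mem' := by
    rintro c _ ⟨P, rfl⟩
    refine ⟨fun j => c • P j, ?_⟩
    rw [Finset.smul_sum]
    refine Finset.sum_congr rfl fun j _ => ?_
    rw [← smul_mul_assoc]
    congr 1
    exact LinearMap.ext fun q => by simp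

theorem mono_mem {n j : ℕ} (p : ℂ[X]) (h : j < n) : LinearMap.mulLeft ℂ p * Dop ^ j ∈ ordLT n := by
  refine ⟨fun i => if i = j then p else 0, ?_⟩
  rw [Finset.sum_eq_single j]
  · simp
  · intro b _ hb; simp [hb]
  · intro hj; exact absurd (Finset.mem_range.2 h) hj

theorem ordLT_mono {m n : ℕ} (h : m ≤ n) : ordLT m ≤ ordLT n := by
  rintro _ ⟨P, rfl⟩
  exact Submodule.sum_mem _ fun j hj => mono_mem _ ((Finset.mem_range.1 hj).trans_le h)

theorem Dpow_mem {n j : ℕ} (h : j < n) : Dop ^ j ∈ ordLT n := by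
  have := mono_mem 1 h
  have e : LinearMap.mulLeft ℂ (1 : ℂ[X]) = 1 := LinearMap.ext fun q => by simp
  rwa [e, one_mul] at this

theorem mulLeft_mem {n : ℕ} (p : ℂ[X]) (h : 0 < n) : LinearMap.mulLeft ℂ p ∈ ordLT n := by
  simpa using mono_mem p h

theorem mulLeft_mul_mem {n : ℕ} (p : ℂ[X]) {T} (hT : T ∈ ordLT n) : LinearMap.mulLeft ℂ p * T ∈ ordLT n := by
  obtain ⟨P, rfl⟩ := hT
  rw [Finset.mul_sum]
  refine Submodule.sum_mem _ fun j hj => ?_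
  have e : LinearMap.mulLeft ℂ p * (LinearMap.mulLeft ℂ (P j) * Dop ^ j) = LinearMap.mulLeft ℂ (p * P j) * Dop ^ j := by
    rw [← mul_assoc]; congr 1; exact LinearMap.ext fun q => by simp [mul_assoc]
  rw [e]
  exact mono_mem _ (Finset.mem_range.1 hj)

theorem D_mulLeft (p : ℂ[X]) : Dop * LinearMap.mulLeft ℂ p = LinearMap.mulLeft ℂ p * Dop + LinearMap.mulLeft ℂ (derivative p) := by
  refine LinearMap.ext fun q => ?_
  simp [Dop, derivative_mul]
  ring

theorem D_mul_mem {n : ℕ} {T} (hT : T ∈ ordLT n) : Dop * T ∈ ordLT (n + 1) := by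
  obtain ⟨P, rfl⟩ := hT
  rw [Finset.mul_sum]
  refine Submodule.sum_mem _ fun j hj => ?_
  have hj := Finset.mem_range.1 hj
  rw [← mul_assoc, D_mulLeft, add_mul, mul_assoc, ← pow_succ']
  exact Submodule.add_mem _ (mono_mem _ (by omega)) (mono_mem _ (by omega))

theorem Dpow_mul_mem {n : ℕ} (k : ℕ) {T} (hT : T ∈ ordLT n) : Dop ^ k * T ∈ ordLT (n + k) := by
  induction k with
  | zero => simpa using hT
  | succ k ih => rw [pow_succ', mul_assoc]; exact D_mul_mem ih

theorem ord_mul_mem {n m : ℕ} {U T} (hU : U ∈ ordLT n) (hT : T ∈ ordLT (m + 1)) : U * T ∈ ordLT (n + m) := by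
  obtain ⟨P, rfl⟩ := hU
  rw [Finset.sum_mul]
  refine Submodule.sum_mem _ fun j hj => ?_
  have hj := Finset.mem_range.1 hj
  rw [mul_assoc]
  exact ordLT_mono (by omega) (mulLeft_mul_mem _ (Dpow_mul_mem j hT))

theorem ord_mul_mem' {n m : ℕ} {U T} (hU : U ∈ ordLT (n + 1)) (hT : T ∈ ordLT m) : U * T ∈ ordLT (n + m) := by
  obtain ⟨P, rfl⟩ := hU
  rw [Finset.sum_mul]
  refine Submodule.sum_mem _ fun j hj => ?_
  have hj := Finset.mem_range.1 hj
  rw [mul_assoc]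
  exact ordLT_mono (by omega) (mulLeft_mul_mem _ (Dpow_mul_mem j hT))

theorem L_monic (α c : ℂ) : ((Dop ^ 3 + Xop ^ 2 + α • (1 : Module.End ℂ ℂ[X])) ^ 2 + c • Dop) - Dop ^ 6 ∈ ordLT 6 := by
  have hX : Xop ^ 2 ∈ ordLT 1 := by
    have := mulLeft_mul_mem X (mulLeft_mem X (n := 1) one_pos)
    rw [pow_two]; exact this
  have h1 : (1 : Module.End ℂ ℂ[X]) ∈ ordLT 1 := by simpa using Dpow_mem (n := 1) (j := 0) one_pos
  have hB : Xop ^ 2 + α • (1 : Module.End ℂ ℂ[X]) ∈ ordLT 1 :=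
    Submodule.add_mem _ hX (Submodule.smul_mem _ _ h1)
  have h3 : Dop ^ 3 ∈ ordLT 4 := Dpow_mem (by omega)
  rw [add_assoc (Dop ^ 3)]
  generalize Xop ^ 2 + α • (1 : Module.End ℂ ℂ[X]) = B at hB
  have e : (Dop ^ 3 + B) ^ 2 + c • Dop - Dop ^ 6 = Dop ^ 3 * B + B * Dop ^ 3 + B * B + c • Dop ^ 1 := by
    have : Dop ^ 6 = Dop ^ 3 * Dop ^ 3 := by rw [← pow_add]
    rw [this, pow_two, pow_one]; noncomm_ring
  rw [e]
  refine Submodule.add_mem _ (Submodule.add_mem _ (Submodule.add_mem _ ?_ ?_) ?_) (Submodule.smul_mem _ _ (Dpow_mem (by omega)))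
  · exact ordLT_mono (by omega) (ord_mul_mem (m := 0) h3 hB)
  · exact ordLT_mono (by omega) (ord_mul_mem (m := 3) hB h3)
  · exact ordLT_mono (by omega) (ord_mul_mem (m := 0) hB hB)

theorem Lpow_monic (L : Module.End ℂ ℂ[X]) (hL : L - Dop ^ 6 ∈ ordLT 6) (i : ℕ) :
    L ^ i - Dop ^ (6 * i) ∈ ordLT (6 * i) := by
  induction i with
  | zero => simp
  | succ i ih =>
    have hL7 : L ∈ ordLT (6 + 1) := by
      have := Submodule.add_mem _ (ordLT_mono (by omega : 6 ≤ 6 + 1) hL) (Dpow_mem (by omega : 6 < 6 + 1))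
      simpa using this
    have e : L ^ (i + 1) - Dop ^ (6 * (i + 1)) = (L ^ i - Dop ^ (6 * i)) * L + Dop ^ (6 * i) * (L - Dop ^ 6) := by
      rw [mul_add, pow_succ, pow_add, mul_one, sub_mul, mul_sub]; abel
    rw [e]
    exact Submodule.add_mem _ (ordLT_mono (by omega) (ord_mul_mem ih hL7))
      (ordLT_mono (by omega) (Dpow_mul_mem (6 * i) hL))

theorem aevalL_mem (L : Module.End ℂ ℂ[X]) (hL : L - Dop ^ 6 ∈ ordLT 6) (p : ℂ[X]) :
    aeval L p ∈ ordLT (6 * p.natDegree + 1) := by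
  rw [aeval_eq_sum_range]
  refine Submodule.sum_mem _ fun i hi => Submodule.smul_mem _ _ ?_
  have hi := Finset.mem_range.1 hi
  have := Submodule.add_mem _ (ordLT_mono (by omega : 6 * i ≤ 6 * p.natDegree + 1) (Lpow_monic L hL i))
    (Dpow_mem (by omega : 6 * i < 6 * p.natDegree + 1))
  simpa using this

theorem wt_mem (L : Module.End ℂ ℂ[X]) (hL : L - Dop ^ 6 ∈ ordLT 6) :
    letI := mirModule Dop L
    ∀ (f : ℂ[X][X]) (m : ℕ) (_ : ∀ s, f.coeff s ≠ 0 → s + 6 * (f.coeff s).natDegree ≤ m)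
      (T : Module.End ℂ ℂ[X]) (_ : T ∈ ordLT 1), f • T ∈ ordLT (m + 1) := by
  let _ := mirModule Dop L
  intro f m hf T hT
  rw [mir_sum Dop L f T]
  refine Submodule.sum_mem _ fun s hs => ?_
  have := hf s (mem_support_iff.1 hs)
  exact ordLT_mono (by omega) (ord_mul_mem (Dpow_mul_mem s hT) (aevalL_mem L hL _))

theorem f_coeff (g : ℕ) (α : ℂ) (p : ℕ → ℂ[X]) (hp : ∀ s, (p s).natDegree ≤ g) (h0 : (p 0).coeff g = 1 / 2) (f : ℂ[X])
   (hf : f = C 4 * (X * (p 0 * p 0)) + (C 48 * (p 0 * p 4) + C (16 * α) * (p 0 * p 2) + C (-12) * (p 1 * p 3)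
      + C (-4 * α) * (p 1 * p 1) + C 4 * (p 2 * p 2))) : f.natDegree ≤ 2 * g + 1 ∧ f.coeff (2 * g + 1) = 1 := by
  have h2 : ∀ i j, (p i * p j).natDegree ≤ 2 * g := fun i j =>
    natDegree_mul_le.trans (by have := hp i; have := hp j; omega)
  have h3 : ∀ c i j, (C c * (p i * p j)).natDegree ≤ 2 * g := fun c i j =>
    (natDegree_C_mul_le _ _).trans (h2 i j)
  have hs : (C 48 * (p 0 * p 4) + C (16 * α) * (p 0 * p 2) + C (-12) * (p 1 * p 3)
      + C (-4 * α) * (p 1 * p 1) + C 4 * (p 2 * p 2)).natDegree ≤ 2 * g := by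
    repeat' refine natDegree_add_le_of_degree_le ?_ ?_
    all_goals exact h3 _ _ _
  constructor
  · rw [hf]
    refine natDegree_add_le_of_degree_le ?_ (by omega)
    refine (natDegree_C_mul_le _ _).trans (natDegree_mul_le.trans ?_)
    have := h2 0 0
    rw [natDegree_X]; omega
  · rw [hf, coeff_add, coeff_eq_zero_of_natDegree_lt (n := 2 * g + 1) (lt_of_le_of_lt hs (by omega)),
      coeff_C_mul, coeff_X_mul, two_mul, coeff_mul_add_eq_of_natDegree_le (hp 0) (hp 0), h0]
    norm_num

theorem exists_d : ∃ d : Module.End ℂ ℂ[X], d ^ 2 = Xop ^ 2 ∧ d * Dop = Dop * d + 1 ∧ d ∈ ordLT 1 := by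
  refine ⟨(-1 : ℂ) • Xop, ?_, ?_, Submodule.smul_mem _ _ (mulLeft_mem X one_pos)⟩
  · rw [_root_.smul_pow]; norm_num
  · have := D_mulLeft X
    rw [derivative_X] at this
    have e : LinearMap.mulLeft ℂ (1 : ℂ[X]) = 1 := LinearMap.ext fun q => by simp
    rw [e] at this
    change Dop * Xop = Xop * Dop + 1 at this
    rw [mul_smul_comm, this, smul_mul_assoc]
    module

/-- Mironov's commuting operators of rank 3 and genus `g`: for
`L = (D³ + X² + α)² + g(g+1)D` there is an operator `M` of order `6g + 3` with
polynomial coefficients and constants `a₀, …, a_{2g}` such that `L∘M = M∘L` and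
`M² = L^{2g+1} + a_{2g}·L^{2g} + … + a₁·L + a₀`. -/
theorem mironov_rank3 (g : ℕ) (hg : 1 ≤ g) (α : ℂ) (hα : α ≠ 0) :
    letI one : Module.End ℂ (Polynomial ℂ) := 1
    letI L : Module.End ℂ (Polynomial ℂ) :=
      (Dop ^ 3 + Xop ^ 2 + α • one) ^ 2 + ((g : ℂ) * ((g : ℂ) + 1)) • Dop
    ∃ (M : Module.End ℂ (Polynomial ℂ)) (P : ℕ → Polynomial ℂ) (a : ℕ → ℂ),
      M = ∑ j ∈ Finset.range (6 * g + 3 + 1), LinearMap.mulLeft ℂ (P j) * Dop ^ j ∧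
      P (6 * g + 3) ≠ 0 ∧
      L * M = M * L ∧
      M ^ 2 = L ^ (2 * g + 1) + ∑ i ∈ Finset.range (2 * g + 1), a i • L ^ i := by
  obtain ⟨L, hL0⟩ : ∃ L : Module.End ℂ ℂ[X], L = (Dop ^ 3 + Xop ^ 2 + α • (1 : Module.End ℂ ℂ[X])) ^ 2
      + ((g : ℂ) * ((g : ℂ) + 1)) • Dop := ⟨_, rfl⟩
  rw [← hL0]
  obtain ⟨d, hd2, hdx, hX1⟩ := exists_d
  have hLdef : L = (Dop ^ 3 + d ^ 2 + α • (1 : Module.End ℂ ℂ[X])) ^ 2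
      + ((g : ℂ) * ((g : ℂ) + 1)) • Dop := by rw [hd2, hL0]
  have hLm : L - Dop ^ 6 ∈ ordLT 6 := hL0 ▸ L_monic α _
  set c := (g : ℂ) * ((g : ℂ) + 1) with hc
  let _ := mirModule Dop L
  have hX : ∀ T : Module.End ℂ ℂ[X], (X : ℂ[X][X]) • T = Dop * T := mirHom_X Dop L
  have hC : ∀ (p : ℂ[X]) (T : Module.End ℂ ℂ[X]), (C p : ℂ[X][X]) • T = T * aeval L p :=
    fun p T => mirHom_C Dop L T p
  have hz : ∀ T : Module.End ℂ ℂ[X], (C X : ℂ[X][X]) • T = T * L := by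
    intro T; rw [hC, aeval_X]
  obtain ⟨V, hV⟩ : ∃ V : ℂ[X][X], V = X ^ 3 + C (C α) := ⟨_, rfl⟩
  obtain ⟨W, hW⟩ : ∃ W : ℂ[X][X], W = C (C c) * X := ⟨_, rfl⟩
  have hd := mir_hd Dop L d hdx
  have hL := mir_hL Dop L d hdx α c hLdef V W hV hW
  have hcm := mir_hc Dop L
  obtain ⟨P, hP1, hP2, hP3, hN⟩ := ode_exists g α V W hV hW
  obtain ⟨M, hM⟩ : ∃ M : Module.End ℂ ℂ[X], M = (2 * P) • (d * d) - (2 * derivative P) • d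
      + (derivative (derivative P) + 2 * V * P) • (1 : Module.End ℂ ℂ[X]) := ⟨_, rfl⟩
  have hLM := mir_comm d L V W P hd hL hz hN M hM
  obtain ⟨F, hF⟩ : ∃ F : ℂ[X][X], F = 4 * C X * P ^ 2 + 2 * P * derivative (derivative (derivative (derivative P)))
      + 8 * P * derivative (derivative P) * V + 4 * P * derivative P * derivative V
      - 2 * derivative P * derivative (derivative (derivative P))
      - 4 * (derivative P) ^ 2 * V + (derivative (derivative P)) ^ 2 - 4 * P ^ 2 * W := ⟨_, rfl⟩
  have hMM := mir_sq d L V W P F hd hL hz hcm M hM hLM hF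
  have hFc := mir_const V W P F hN hF
  have hPg : ∀ s, (P.coeff s).natDegree ≤ g := by
    intro s
    by_cases h : s ≤ g
    · exact (hP2 s h).trans (by omega)
    · rw [hP1 s (by omega)]; simp
  have hf := f_coeff g α (fun s => P.coeff s) hPg hP3 (F.coeff 0) (by
    have n2 : (2 : ℂ[X][X]).coeff 0 = 2 := by simp
    have n4 : (4 : ℂ[X][X]).coeff 0 = 4 := by simp
    have n8 : (8 : ℂ[X][X]).coeff 0 = 8 := by simp
    have v0 : V.coeff 0 = C α := by rw [hV]; simp
    have v1 : V.coeff (0 + 1) = 0 := by rw [hV]; simp [coeff_X_pow, coeff_C]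
    have w0 : W.coeff 0 = 0 := by rw [hW]; simp
    rw [hF]
    simp only [pow_two, coeff_add, coeff_sub, mul_coeff_zero, coeff_derivative, n2, n4, n8, v0, v1, w0, coeff_C_zero,
      C_mul, C_neg, map_ofNat]
    norm_num
    ring)
  -- the order
  have hord : M - Dop ^ (6 * g + 3) ∈ ordLT (6 * g + 3) := by
    have h1 : (1 : Module.End ℂ ℂ[X]) ∈ ordLT 1 := by simpa using Dpow_mem (n := 1) (j := 0) one_pos
    have hXX : d * d ∈ ordLT 1 := ord_mul_mem (m := 0) hX1 hX1
    have hw := wt_mem L hLm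
    have w0 : ∀ s, P.coeff s ≠ 0 → s + 6 * (P.coeff s).natDegree ≤ 6 * g := by
      intro s hs
      have h : s ≤ g := by
        by_contra h
        exact hs (hP1 s (by omega))
      have := hP2 s h
      omega
    have hder : ∀ f : ℂ[X][X], (∀ s, f.coeff s ≠ 0 → s + 6 * (f.coeff s).natDegree ≤ 6 * g) →
        ∀ s, (derivative f).coeff s ≠ 0 → s + 6 * ((derivative f).coeff s).natDegree ≤ 6 * g := by
      intro f hf s hs
      rw [coeff_derivative] at hs ⊢
      have := hf (s + 1) (left_ne_zero_of_mul hs)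
      have e : ((s : ℂ[X]) + 1) = C ((s : ℂ) + 1) := by simp
      rw [e]
      have := natDegree_mul_C_le (f.coeff (s + 1)) ((s : ℂ) + 1)
      omega
    have w1 := hder P w0
    have w2 := hder _ w1
    obtain ⟨P', hP'⟩ : ∃ P' : ℂ[X][X], P' = P - C (C (1 / 2) * X ^ g) := ⟨_, rfl⟩
    have w' : ∀ s, P'.coeff s ≠ 0 → s + 6 * (P'.coeff s).natDegree ≤ 6 * g - 1 := by
      intro s hs
      rcases s with _ | s
      · have e : P'.coeff 0 = P.coeff 0 - C (1 / 2) * X ^ g := by rw [hP', coeff_sub, coeff_C_zero]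
        have hdeg : (P'.coeff 0).natDegree ≤ g := by
          rw [e]
          exact natDegree_sub_le_of_le (hPg 0) (natDegree_C_mul_X_pow_le _ _) |>.trans (by simp)
        have hne : (P'.coeff 0).natDegree ≠ g := by
          intro h
          have hl : (P'.coeff 0).leadingCoeff = 0 := by
            rw [leadingCoeff, h, e, coeff_sub, hP3, coeff_C_mul_X_pow, if_pos rfl, sub_self]
          exact hs (leadingCoeff_eq_zero.1 hl)
        omega
      · have e : P'.coeff (s + 1) = P.coeff (s + 1) := by rw [hP', coeff_sub, coeff_C_succ, sub_zero]
        rw [e] at hs ⊢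
        have h : s + 1 ≤ g := by
          by_contra h
          exact hs (hP1 _ (by omega))
        have := hP2 _ h
        omega
    have half : (2 : ℂ[X][X]) * C (C (1 / 2)) = 1 := by
      have : (2 : ℂ[X][X]) = C (C 2) := by simp only [map_ofNat]
      rw [this, ← C_mul, ← C_mul]; norm_num
    have hMe : M = (P • (d * d) + P • (d * d))
        - (derivative P • d + derivative P • d)
        + derivative (derivative P) • (1 : Module.End ℂ ℂ[X])
        + (P • ((C (C α) : ℂ[X][X]) • (1 : Module.End ℂ ℂ[X])) + P • ((C (C α) : ℂ[X][X]) • (1 : Module.End ℂ ℂ[X])))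
        + (X ^ 3 : ℂ[X][X]) • (P' • (1 : Module.End ℂ ℂ[X]) + P' • (1 : Module.End ℂ ℂ[X]))
        + (X ^ 3 : ℂ[X][X]) • (C (X ^ g) : ℂ[X][X]) • (1 : Module.End ℂ ℂ[X]) := by
      rw [hM, hV, hP', C_mul]
      match_scalars
      · ring
      · ring
      · linear_combination (X ^ 3 * C (X ^ g)) * half
    have hX3 : ∀ T : Module.End ℂ ℂ[X], (X ^ 3 : ℂ[X][X]) • T = Dop ^ 3 * T := by
      intro T
      simp only [pow_succ, pow_zero, one_mul, mul_smul, hX, mul_assoc]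
    rw [hMe, hX3, hX3, hC (X ^ g), hC, one_mul, one_mul, aeval_C, aeval_X_pow, add_sub_assoc]
    have hα1 : algebraMap ℂ (Module.End ℂ ℂ[X]) α ∈ ordLT 1 := by
      rw [Algebra.algebraMap_eq_smul_one]; exact Submodule.smul_mem _ _ h1
    have hle : ordLT (6 * g + 1) ≤ ordLT (6 * g + 3) := ordLT_mono (by omega)
    have a1 := hle (hw P _ w0 _ hXX)
    have a2 := hle (hw _ _ w1 _ hX1)
    have a3 := hle (hw _ _ w2 _ h1)
    have a4 := hle (hw P _ w0 _ hα1)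
    have a5 := hw P' _ w' _ h1
    rw [Nat.sub_add_cancel (by omega)] at a5
    have a6 := Dpow_mul_mem 3 (Submodule.add_mem _ a5 a5)
    have a7 := Dpow_mul_mem 3 (Lpow_monic L hLm g)
    rw [mul_sub, ← pow_add, add_comm 3] at a7
    exact Submodule.add_mem _ (Submodule.add_mem _ (Submodule.add_mem _ (Submodule.add_mem _
      (Submodule.sub_mem _ (Submodule.add_mem _ a1 a1) (Submodule.add_mem _ a2 a2)) a3)
      (Submodule.add_mem _ a4 a4)) a6) a7
  obtain ⟨Q, hQ⟩ := hord
  refine ⟨M, fun j => if j = 6 * g + 3 then 1 else Q j, fun i => (F.coeff 0).coeff i, ?_, ?_, hLM, ?_⟩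
  · rw [Finset.sum_range_succ]
    simp only [if_true]
    have e : LinearMap.mulLeft ℂ (1 : ℂ[X]) = 1 := LinearMap.ext fun q => by simp
    rw [e, one_mul, ← sub_eq_iff_eq_add, hQ]
    refine Finset.sum_congr rfl fun j hj => ?_
    rw [if_neg (Finset.mem_range.1 hj).ne]
  · simp
  · rw [pow_two, hMM, hFc, hC, one_mul, coeff_C_zero, aeval_eq_sum_range' (Nat.lt_succ_of_le hf.1),
      Finset.sum_range_succ, hf.2, one_smul, add_comm]
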